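/- arXiv:1905.03174 — 2 statements merged into one kernel-verified Lean document; each statement's English description precedes it below -/
import Mathlib

section
/- Let m, d, ν be integers with m even, m ≥ 2, ν odd, ν ≥ 2m + 1, ν² ≤ 8d + 1, 2d ≥ m(m+1), and (2m+1)(d−1) ≥ 2((2d−ν+2)(m−1) + 2d − m − m²). Then (m, d, ν) is one of (2, 3, 5), (2, 4, 5), (4, 10, 9). -/
/-- The purely computational core of the paper's proof of Theorem 2.10:
if `m` is even, `m ≥ 2`, `ν` is odd, `ν ≥ 2m+1`, `ν² ≤ 8d+1`, `2d ≥ m(m+1)`,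
and `(2m+1)(d−1) ≥ 2((2d−ν+2)(m−1) + 2d − m − m²)`, then
`(m, d, ν)` is one of `(2, 3, 5)`, `(2, 4, 5)`, `(4, 10, 9)`. -/
theorem stmt_0 (m d ν : ℤ) (hm_even : Even m) (hm : 2 ≤ m)
    (hν_odd : Odd ν) (hν : 2 * m + 1 ≤ ν)
    (hKotani : ν ^ 2 ≤ 8 * d + 1)
    (hdeg : m * (m + 1) ≤ 2 * d)
    (hmain : 2 * ((2 * d - ν + 2) * (m - 1) + 2 * d - m - m ^ 2) ≤ (2 * m + 1) * (d - 1)) :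
    (m, d, ν) = (2, 3, 5) ∨ (m, d, ν) = (2, 4, 5) ∨ (m, d, ν) = (4, 10, 9) := by
  have h1 : d * (2 * m - 1) ≤ 2 * (ν - 2) * (m - 1) + 2 * m ^ 2 - 1 := by nlinarith
  have h2 : (ν ^ 2 - 1) * (2 * m - 1) ≤ 16 * (ν - 2) * (m - 1) + 16 * m ^ 2 - 8 := by
    have := mul_le_mul_of_nonneg_right hKotani (show 0 ≤ 2 * m - 1 by linarith)
    nlinarith
  have hm4 : m ≤ 4 := by
    by_contra hc
    have hc : 5 ≤ m := by omega
    obtain ⟨t, rfl⟩ : ∃ t, ν = 2 * m + 1 + t := ⟨ν - (2 * m + 1), by ring⟩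
    have ht : 0 ≤ t := by linarith
    have e1 : 0 ≤ t * (8 * m ^ 2 - 16 * m + 14) := mul_nonneg ht (by nlinarith)
    have e2 : 0 ≤ t ^ 2 * (2 * m - 1) := mul_nonneg (sq_nonneg t) (by linarith)
    have e3 : 0 < 8 * m ^ 3 - 44 * m ^ 2 + 44 * m - 8 := by
      obtain ⟨s, rfl⟩ : ∃ s, m = 5 + s := ⟨m - 5, by ring⟩
      have hs : 0 ≤ s := by linarith
      ring_nf
      positivity
    nlinarith
  obtain ⟨k, rfl⟩ := hν_odd
  obtain ⟨j, rfl⟩ := hm_even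
  have hj : j = 1 ∨ j = 2 := by omega
  simp only [Prod.mk.injEq]
  rcases hj with rfl | rfl
  · have : k ≤ 2 := by nlinarith
    have : k = 2 := by omega
    subst this
    omega
  · have : k ≤ 4 := by nlinarith
    have : k = 4 := by omega
    subst this
    omega
end

section
/- Let U ⊆ ℂ be an open set containing 0, let K be a natural number, and let f : ℂ → ℂ be complex-differentiable on U \ {0}. Suppose there exists a function g : ℂ → ℂ that is C^∞ in the real sense on U (ContDiffOn ℝ ⊤ g U) and satisfies g(z) = (conj z)^K · f(z) for all z ∈ U \ {0}. Then f extends holomorphically across 0: there exists F : ℂ → ℂ complex-differentiable on U with F(z) = f(z) for all z ∈ U \ {0}. -/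
/-- Local content of Section 4.4 of the paper: if `f` is holomorphic on a
punctured neighbourhood of `0` and `z ↦ (conj z)^K * f z` extends to a real-smooth
function on the full neighbourhood, then `f` extends holomorphically across `0`. -/
theorem stmt_14 (U : Set ℂ) (hU : IsOpen U) (h0 : (0 : ℂ) ∈ U) (K : ℕ)
    (f : ℂ → ℂ) (hf : DifferentiableOn ℂ f (U \ {0}))
    (g : ℂ → ℂ) (hg : ContDiffOn ℝ (⊤ : ℕ∞) g U)
    (hgf : ∀ z ∈ U \ {0}, g z = (starRingEnd ℂ z) ^ K * f z) :
    ∃ F : ℂ → ℂ, DifferentiableOn ℂ F U ∧ ∀ z ∈ U \ {0}, F z = f z := by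
  have hU' : IsOpen (U \ {0}) := hU.sdiff isClosed_singleton
  induction K generalizing g with
  | zero =>
    have h : ∀ z ∈ U \ {0}, g z = f z := fun z hz => by simpa using hgf z hz
    refine ⟨g, ?_, h⟩
    rw [← Complex.differentiableOn_compl_singleton_and_continuousAt_iff (hU.mem_nhds h0)]
    exact ⟨hf.congr h, hg.continuousOn.continuousAt (hU.mem_nhds h0)⟩
  | succ K ih =>
    have hd : ContDiffOn ℝ (⊤ : ℕ∞) (fderiv ℝ g) U :=
      hg.fderiv_of_isOpen hU (by simp)
    refine ih (fun z => (2 * ((K : ℂ) + 1))⁻¹ *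
      (fderiv ℝ g z 1 + Complex.I * fderiv ℝ g z Complex.I)) ?_ ?_
    · exact contDiffOn_const.mul ((hd.clm_apply contDiffOn_const).add
        (contDiffOn_const.mul (hd.clm_apply contDiffOn_const)))
    · intro z hz
      have hfz : HasFDerivAt f
          ((ContinuousLinearMap.toSpanSingleton ℂ (deriv f z)).restrictScalars ℝ) z :=
        ((hf.differentiableAt (hU'.mem_nhds hz)).hasDerivAt.hasFDerivAt).restrictScalars ℝ
      have hc : HasFDerivAt (fun w : ℂ => starRingEnd ℂ w)
          (Complex.conjCLE : ℂ →L[ℝ] ℂ) z := Complex.conjCLE.hasFDerivAt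
      have hp := (hc.pow (K + 1)).mul hfz
      have he : g =ᶠ[nhds z] (fun w : ℂ => (starRingEnd ℂ w) ^ (K + 1) * f w) :=
        Filter.eventuallyEq_of_mem (hU'.mem_nhds hz) hgf
      have hg' := (hp.congr_of_eventuallyEq he).fderiv
      have hK : (K : ℂ) + 1 ≠ 0 := by exact_mod_cast Nat.succ_ne_zero K
      simp only [hg']
      simp
      field_simp
      ring_nf
      simp [Complex.I_sq]
      try ring
end
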